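/- arXiv:0910.3118 — 3 statements merged into one kernel-verified Lean document; each statement's English description precedes it below -/
import Mathlib

section
/- Let Γ be an unweighted graph with N vertices. Then ((N−1)/N)·h ≤ (2𝓡/(1+𝓡))·h ≤ h̄ ≤ 1, and equality holds in the leftmost inequality if and only if Γ is a regular graph and N is odd. -/
open Finset

noncomputable section

namespace BJ

variable {V : Type*} [Fintype V] [DecidableEq V]

/-- The degree `d_i = ∑_j w_ij` of a vertex. -/
def deg (w : V → V → ℝ) (i : V) : ℝ := ∑ j, w i j

/-- The volume `vol(A) = ∑_{i ∈ A} d_i` of a vertex subset. -/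
def vol (w : V → V → ℝ) (A : Finset V) : ℝ := ∑ i ∈ A, deg w i

/-- The total edge weight `|E(A,B)| = ∑_{i ∈ A, j ∈ B} w_ij` between two vertex subsets. -/
def eW (w : V → V → ℝ) (A B : Finset V) : ℝ := ∑ i ∈ A, ∑ j ∈ B, w i j

/-- The normalized graph Laplacian `(Δu)(i) = u(i) - (1/d_i) ∑_j w_ij u(j)`. -/
def lap (w : V → V → ℝ) (u : V → ℝ) (i : V) : ℝ :=
  u i - (1 / deg w i) * ∑ j, w i j * u j

/-- `lam` is an eigenvalue of the normalized graph Laplacian. -/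
def IsEigen (w : V → V → ℝ) (lam : ℝ) : Prop :=
  ∃ u : V → ℝ, u ≠ 0 ∧ ∀ i, lap w u i = lam * u i

/-- The weighted graph is connected: any two vertices are joined by a chain of
positive-weight edges. -/
def Conn (w : V → V → ℝ) : Prop :=
  ∀ i j : V, Relation.ReflTransGen (fun a b => 0 < w a b) i j

/-- The weighted graph is bipartite: the vertex set splits into two nonempty classes with
no edges inside a class. -/
def Bipartite (w : V → V → ℝ) : Prop :=
  ∃ A : Finset V, A.Nonempty ∧ Aᶜ.Nonempty ∧
    (∀ i ∈ A, ∀ j ∈ A, w i j = 0) ∧ (∀ i ∈ Aᶜ, ∀ j ∈ Aᶜ, w i j = 0)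

/-- The Cheeger constant
`h = min { |E(U,Uᶜ)| / vol(U) : ∅ ≠ U ⊊ V, vol(U) ≤ vol(V)/2 }`. -/
def cheeger (w : V → V → ℝ) : ℝ :=
  sInf { r : ℝ | ∃ U : Finset V, U.Nonempty ∧ U ≠ Finset.univ ∧
    vol w U ≤ vol w Finset.univ / 2 ∧ r = eW w U Uᶜ / vol w U }

/-- The dual Cheeger constant
`h̄ = max { 2|E(V₁,V₂)| / (vol(V₁)+vol(V₂)) }` over pairs of disjoint nonempty vertex sets
`V₁, V₂` (the third class `V₃` of the partition being the complement of `V₁ ∪ V₂`). -/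
def dualCheeger (w : V → V → ℝ) : ℝ :=
  sSup { r : ℝ | ∃ V1 V2 : Finset V, V1.Nonempty ∧ V2.Nonempty ∧ Disjoint V1 V2 ∧
    r = 2 * eW w V1 V2 / (vol w V1 + vol w V2) }

/-- The weights of the neighborhood graph `Γ[l]`:
`w_ij[l] = ∑_{k₁,…,k_{l-1}} w_{i k₁} w_{k₁ k₂} ⋯ w_{k_{l-1} j} / (d_{k₁} ⋯ d_{k_{l-1}})`,
defined recursively (as a matrix, `wl w l = D ⬝ P^l`; in particular `wl w 1 = w`). -/
def wl (w : V → V → ℝ) : ℕ → V → V → ℝ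
  | 0 => fun i j => if i = j then deg w i else 0
  | n + 1 => fun i j => ∑ k, wl w n i k * w k j / deg w k

/-!
Writing `D(U) = |vol U - vol Uᶜ|`, one has `2𝓡(U) / (1 + 𝓡(U)) = 1 - D(U) / vol V`, so maximising
`𝓡` means minimising `D`, and the leftmost inequality says that `N * D(U) ≤ vol V` for an optimal
`U`. Distribute the vertices greedily, in order of decreasing degree, always adding to the lighter
side. If `p` is the last vertex at which the lighter side became the heavier one, and `τ` is the
total degree of the vertices after `p`, then `D(U) ≤ d_p - τ`. The vertices up to `p` have degree
at least `d_p`, and those after `p` have degree at least `d_p / (N - 1)`, since all degrees lie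
between `1` and `N - 1`; together this gives `N * D(U) + 2τ ≤ vol V`. Equality forces `τ = 0` and
all degrees equal to `D(U)`. If all degrees are `d`, then `D` vanishes somewhere when `N` is even,
and is everywhere at least `d` when `N` is odd.

The middle inequality compares `h` and `h̄` on one cut `(U, Uᶜ)` that attains `𝓡`.
-/

lemma compl_nonempty_of_ne_univ {U : Finset V} (hU : U ≠ univ) : Uᶜ.Nonempty :=
  (compl_ne_univ_iff_nonempty Uᶜ).1 (by rwa [compl_compl])

section BalancedPartition

variable {ι K : Type*} [DecidableEq ι] [Field K] [LinearOrder K] [IsStrictOrderedRing K]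

lemma exists_subset_sum_sub_sum_sdiff_eq_abs (d : ι → K) {s U : Finset ι} (hU : U ⊆ s) :
    ∃ U' ⊆ s, ∑ i ∈ U', d i - ∑ i ∈ s \ U', d i = |∑ i ∈ U, d i - ∑ i ∈ s \ U, d i| := by
  rcases le_total 0 (∑ i ∈ U, d i - ∑ i ∈ s \ U, d i) with h | h
  · exact ⟨U, hU, (abs_of_nonneg h).symm⟩
  · refine ⟨s \ U, sdiff_subset, ?_⟩
    rw [Finset.sdiff_sdiff_eq_self hU, abs_of_nonpos h, neg_sub]

/-- In the greedy distribution by decreasing `d`, the index `p` is the last one at which the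
heavier side changed, and `L` consists of the indices up to `p`. -/
lemma exists_subset_abs_sum_sub_sum_sdiff_le {d : ι → K} {s : Finset ι} (hs : s.Nonempty)
    (hd : ∀ i ∈ s, 0 ≤ d i) :
    ∃ U ⊆ s, ∃ L ⊆ s, ∃ p ∈ L, (∀ i ∈ L, d p ≤ d i) ∧
      |∑ i ∈ U, d i - ∑ i ∈ s \ U, d i| ≤ d p - ∑ i ∈ s \ L, d i := by
  induction s using Finset.induction_on_min_value d with
  | empty => exact absurd hs not_nonempty_empty
  | insert a s ha hmin ih =>
    rcases s.eq_empty_or_nonempty with rfl | hs'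
    · have ha_nonneg : 0 ≤ d a := hd a (mem_insert_self a ∅)
      exact ⟨{a}, by simp, {a}, by simp, a, by simp, by simp, by simp [abs_of_nonneg ha_nonneg]⟩
    obtain ⟨U₀, hU₀, L, hL, p, hp, hpL, hbound⟩ := ih hs' fun i hi => hd i (mem_insert_of_mem hi)
    obtain ⟨U, hU, hUabs⟩ := exists_subset_sum_sub_sum_sdiff_eq_abs d hU₀
    rw [← hUabs] at hbound
    have hUnonneg : 0 ≤ ∑ i ∈ U, d i - ∑ i ∈ s \ U, d i := hUabs ▸ abs_nonneg _
    have sum_insert_sdiff {T : Finset ι} (hT : T ⊆ s) :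
        ∑ i ∈ insert a s \ T, d i = d a + ∑ i ∈ s \ T, d i := by
      rw [insert_sdiff_of_notMem _ fun h => ha (hT h), sum_insert fun h => ha (sdiff_subset h)]
    refine ⟨U, hU.trans (subset_insert a s), ?_⟩
    rw [sum_insert_sdiff hU]
    rcases le_total (d a) (∑ i ∈ U, d i - ∑ i ∈ s \ U, d i) with h | h
    · refine ⟨L, hL.trans (subset_insert a s), p, hp, hpL, ?_⟩
      rw [sum_insert_sdiff hL, abs_of_nonneg] <;> linarith
    · refine ⟨insert a s, Subset.rfl, a, mem_insert_self a s, ?_, ?_⟩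
      · simpa only [forall_mem_insert, le_refl, true_and] using hmin
      · rw [Finset.sdiff_self, sum_empty, abs_of_nonpos] <;> linarith

lemma exists_card_mul_abs_sum_sub_sum_compl_le [Fintype ι] [Nonempty ι] {d : ι → K}
    (hd : ∀ i, 0 < d i) (hratio : ∀ i j, d i ≤ ((Fintype.card ι : K) - 1) * d j) :
    ∃ U : Finset ι, Fintype.card ι * |∑ i ∈ U, d i - ∑ i ∈ Uᶜ, d i| ≤ ∑ i, d i ∧
      (Fintype.card ι * |∑ i ∈ U, d i - ∑ i ∈ Uᶜ, d i| = ∑ i, d i →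
        ∀ i, d i = |∑ i ∈ U, d i - ∑ i ∈ Uᶜ, d i|) := by
  obtain ⟨U, -, L, -, p, -, hpL, hbound⟩ :=
    exists_subset_abs_sum_sub_sum_sdiff_le univ_nonempty fun i _ => (hd i).le
  rw [← compl_eq_univ_sdiff, ← compl_eq_univ_sdiff] at hbound
  set D := |∑ i ∈ U, d i - ∑ i ∈ Uᶜ, d i|
  set τ := ∑ i ∈ Lᶜ, d i with hτ
  have hτ_nonneg : 0 ≤ τ := sum_nonneg fun i _ => (hd i).le
  have hlarge : #L * d p ≤ ∑ i ∈ L, d i := by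
    simpa only [nsmul_eq_mul] using card_nsmul_le_sum L d (d p) hpL
  have hsmall : #Lᶜ * d p ≤ (Fintype.card ι - 1) * τ := by
    simpa only [nsmul_eq_mul, hτ, mul_sum] using
      card_nsmul_le_sum Lᶜ (fun i => ((Fintype.card ι : K) - 1) * d i) (d p) fun i _ => hratio p i
  have hcard : (#L : K) + #Lᶜ = Fintype.card ι := mod_cast card_add_card_compl L
  have hsum : ∑ i ∈ L, d i + τ = ∑ i, d i := sum_add_sum_compl L d
  have hmain : Fintype.card ι * D + 2 * τ ≤ ∑ i, d i := by
    calc Fintype.card ι * D + 2 * τ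
        ≤ Fintype.card ι * (d p - τ) + 2 * τ := by gcongr
      _ = #L * d p + #Lᶜ * d p - (Fintype.card ι - 2) * τ := by rw [← hcard]; ring
      _ ≤ ∑ i ∈ L, d i + (Fintype.card ι - 1) * τ - (Fintype.card ι - 2) * τ := by gcongr
      _ = ∑ i, d i := by rw [← hsum]; ring
  refine ⟨U, by linarith, fun heq => ?_⟩
  have hτ_zero : τ = 0 := by linarith
  have hL : L = univ := by
    by_contra hne
    exact (sum_pos (fun i _ => hd i) (compl_nonempty_of_ne_univ hne)).ne' hτ_zero
  have hDle : ∀ i ∈ univ, D ≤ d i := fun i hi => by linarith [hpL i (hL ▸ hi)]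
  have hsumD : ∑ _i : ι, D = ∑ i, d i := by
    rw [sum_const, card_univ, nsmul_eq_mul, heq]
  exact fun i => ((sum_eq_sum_iff_of_le hDle).1 hsumD i (mem_univ i)).symm

end BalancedPartition

variable {w : V → V → ℝ}

section Volume

lemma vol_add_vol_compl (w : V → V → ℝ) (U : Finset V) : vol w U + vol w Uᶜ = vol w univ :=
  sum_add_sum_compl U _

omit [DecidableEq V] in
lemma vol_nonneg (hdeg : ∀ i, 0 ≤ deg w i) (U : Finset V) : 0 ≤ vol w U :=
  sum_nonneg fun i _ => hdeg i

omit [DecidableEq V] in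
lemma vol_pos (hdeg : ∀ i, 0 < deg w i) {U : Finset V} (hU : U.Nonempty) : 0 < vol w U :=
  sum_pos (fun i _ => hdeg i) hU

omit [DecidableEq V] in
lemma vol_eq_card_mul {d : ℝ} (hreg : ∀ i, deg w i = d) (U : Finset V) : vol w U = #U * d := by
  rw [vol, sum_congr rfl fun i _ => hreg i, sum_const, nsmul_eq_mul]

omit [DecidableEq V] in
lemma Conn.deg_pos [Nontrivial V] (hconn : Conn w) (hw : ∀ i j, 0 ≤ w i j) (i : V) :
    0 < deg w i := by
  obtain ⟨j, hji⟩ := exists_ne i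
  obtain hij | ⟨k, hik, -⟩ := (hconn i j).cases_head
  · exact absurd hij.symm hji
  · exact sum_pos' (fun k _ => hw i k) ⟨k, mem_univ k, hik⟩

end Volume

section CheegerConstants

omit [DecidableEq V] in
lemma eW_le_vol (hw : ∀ i j, 0 ≤ w i j) (A B : Finset V) : eW w A B ≤ vol w A :=
  sum_le_sum fun i _ => sum_le_sum_of_subset_of_nonneg (subset_univ B) fun j _ _ => hw i j

omit [Fintype V] [DecidableEq V] in
lemma eW_comm (hsym : ∀ i j, w i j = w j i) (A B : Finset V) : eW w A B = eW w B A := by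
  rw [eW, sum_comm]
  exact sum_congr rfl fun i _ => sum_congr rfl fun j _ => hsym j i

omit [DecidableEq V] in
lemma Conn.exists_mem_notMem_pos (hconn : Conn w) {U : Finset V} (hU : U.Nonempty)
    (hU' : U ≠ univ) : ∃ i ∈ U, ∃ j ∉ U, 0 < w i j := by
  obtain ⟨i, hi⟩ := hU
  by_contra! hclosed
  refine hU' (eq_univ_of_forall fun j => ?_)
  induction hconn i j with
  | refl => exact hi
  | tail _ hpos ih => exact by_contra fun hout => (hclosed _ ih _ hout).not_gt hpos

lemma Conn.eW_compl_pos (hconn : Conn w) (hw : ∀ i j, 0 ≤ w i j) {U : Finset V}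
    (hU : U.Nonempty) (hU' : U ≠ univ) : 0 < eW w U Uᶜ := by
  obtain ⟨i, hi, j, hj, hij⟩ := hconn.exists_mem_notMem_pos hU hU'
  exact sum_pos' (fun i _ => sum_nonneg fun j _ => hw i j)
    ⟨i, hi, sum_pos' (fun j _ => hw i j) ⟨j, mem_compl.2 hj, hij⟩⟩

lemma finite_cheeger_set (w : V → V → ℝ) :
    {r : ℝ | ∃ U : Finset V, U.Nonempty ∧ U ≠ univ ∧ vol w U ≤ vol w univ / 2 ∧
      r = eW w U Uᶜ / vol w U}.Finite :=
  (Set.finite_range fun U => eW w U Uᶜ / vol w U).subset fun _ ⟨U, _, _, _, hr⟩ => ⟨U, hr.symm⟩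

lemma cheeger_le {U : Finset V} (hU : U.Nonempty) (hU' : U ≠ univ)
    (hvol : vol w U ≤ vol w univ / 2) : cheeger w ≤ eW w U Uᶜ / vol w U :=
  csInf_le (finite_cheeger_set w).bddBelow ⟨U, hU, hU', hvol, rfl⟩

omit [DecidableEq V] in
lemma exists_vol_le_half [Nontrivial V] (w : V → V → ℝ) :
    ∃ U : Finset V, U.Nonempty ∧ U ≠ univ ∧ vol w U ≤ vol w univ / 2 := by
  classical
  obtain ⟨a, b, hab⟩ := exists_pair_ne V
  have hne : ({a} : Finset V) ≠ univ := fun h => hab (mem_singleton.1 (h ▸ mem_univ b)).symm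
  have hvol := vol_add_vol_compl w {a}
  rcases le_total (vol w {a}) (vol w {a}ᶜ) with h | h
  · exact ⟨{a}, singleton_nonempty a, hne, by linarith⟩
  · exact ⟨{a}ᶜ, compl_nonempty_of_ne_univ hne, by simp, by linarith⟩

lemma Conn.cheeger_pos [Nontrivial V] (hconn : Conn w) (hw : ∀ i j, 0 ≤ w i j) :
    0 < cheeger w := by
  obtain ⟨U₀, hU₀, hU₀', hvol₀⟩ := exists_vol_le_half w
  obtain ⟨U, hU, hU', -, hcheeger⟩ :=
    Set.Nonempty.csInf_mem (by exact ⟨_, U₀, hU₀, hU₀', hvol₀, rfl⟩) (finite_cheeger_set w)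
  rw [cheeger, hcheeger]
  exact div_pos (hconn.eW_compl_pos hw hU hU') (vol_pos (hconn.deg_pos hw) hU)

omit [DecidableEq V] in
lemma two_mul_eW_div_le_one (hw : ∀ i j, 0 ≤ w i j) (hsym : ∀ i j, w i j = w j i)
    (A B : Finset V) : 2 * eW w A B / (vol w A + vol w B) ≤ 1 := by
  have hA := eW_le_vol hw A B
  have hB := eW_le_vol hw B A
  have hdeg i : 0 ≤ deg w i := sum_nonneg fun j _ => hw i j
  rw [eW_comm hsym] at hB
  exact div_le_one_of_le₀ (by linarith) (add_nonneg (vol_nonneg hdeg A) (vol_nonneg hdeg B))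

omit [DecidableEq V] in
lemma dualCheeger_le_one (hw : ∀ i j, 0 ≤ w i j) (hsym : ∀ i j, w i j = w j i) :
    dualCheeger w ≤ 1 :=
  Real.sSup_le (fun _ ⟨A, B, _, _, _, hr⟩ => hr ▸ two_mul_eW_div_le_one hw hsym A B) zero_le_one

lemma two_mul_eW_compl_div_le_dualCheeger {U : Finset V} (hU : U.Nonempty) (hU' : U ≠ univ) :
    2 * eW w U Uᶜ / vol w univ ≤ dualCheeger w := by
  refine le_csSup ?_ ⟨U, Uᶜ, hU, compl_nonempty_of_ne_univ hU', disjoint_compl_right, ?_⟩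
  · refine ((Set.finite_range fun P : Finset V × Finset V =>
      2 * eW w P.1 P.2 / (vol w P.1 + vol w P.2)).subset ?_).bddAbove
    exact fun _ ⟨A, B, _, _, _, hr⟩ => ⟨(A, B), hr.symm⟩
  · rw [vol_add_vol_compl]

end CheegerConstants

section Imbalance

/-- The volume difference `|vol(U) - vol(V∖U)|` between the two sides of a cut. -/
def imbalance (w : V → V → ℝ) (U : Finset V) : ℝ := |vol w U - vol w Uᶜ|

/-- The ratio `𝓡(U)` of the smaller to the larger volume of the two sides of a cut. -/
def volRatio (w : V → V → ℝ) (U : Finset V) : ℝ :=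
  min (vol w U) (vol w Uᶜ) / max (vol w U) (vol w Uᶜ)

/-- The constant `𝓡`, the largest volume ratio of a cut into two nonempty sides. -/
def maxVolRatio (w : V → V → ℝ) : ℝ :=
  sSup {r : ℝ | ∃ U : Finset V, U.Nonempty ∧ U ≠ univ ∧ r = volRatio w U}

lemma imbalance_compl (w : V → V → ℝ) (U : Finset V) : imbalance w Uᶜ = imbalance w U := by
  rw [imbalance, compl_compl, abs_sub_comm, imbalance]

lemma imbalance_le_vol_univ (hdeg : ∀ i, 0 ≤ deg w i) (U : Finset V) :
    imbalance w U ≤ vol w univ := by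
  have hU := vol_nonneg hdeg U
  have hUc := vol_nonneg hdeg Uᶜ
  rw [imbalance, ← vol_add_vol_compl w U, abs_le]
  constructor <;> linarith

lemma imbalance_empty (hvol : 0 ≤ vol w univ) : imbalance w ∅ = vol w univ := by
  rw [imbalance, compl_empty, show vol w ∅ = 0 from sum_empty, zero_sub, abs_neg,
    abs_of_nonneg hvol]

lemma volRatio_eq (w : V → V → ℝ) (U : Finset V) :
    volRatio w U = (vol w univ - imbalance w U) / (vol w univ + imbalance w U) := by
  rw [volRatio, imbalance, ← vol_add_vol_compl w U]
  rcases le_total (vol w U) (vol w Uᶜ) with h | h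
  · rw [min_eq_left h, max_eq_right h, abs_of_nonpos (sub_nonpos.2 h),
      ← mul_div_mul_left (vol w U) (vol w Uᶜ) two_ne_zero]
    ring_nf
  · rw [min_eq_right h, max_eq_left h, abs_of_nonneg (sub_nonneg.2 h),
      ← mul_div_mul_left (vol w Uᶜ) (vol w U) two_ne_zero]
    ring_nf

lemma two_mul_volRatio_div_one_add_volRatio (hvol : 0 < vol w univ) (U : Finset V) :
    2 * volRatio w U / (1 + volRatio w U) = 1 - imbalance w U / vol w univ := by
  have hD : 0 ≤ imbalance w U := abs_nonneg _
  have hsum : vol w univ + imbalance w U ≠ 0 := by positivity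
  have hone : 1 + volRatio w U = 2 * vol w univ / (vol w univ + imbalance w U) := by
    rw [volRatio_eq]
    field_simp
    ring
  rw [hone, volRatio_eq]
  field_simp

lemma volRatio_le_volRatio_iff (hvol : 0 < vol w univ) {U U' : Finset V} :
    volRatio w U ≤ volRatio w U' ↔ imbalance w U' ≤ imbalance w U := by
  have hD : 0 ≤ imbalance w U := abs_nonneg _
  have hD' : 0 ≤ imbalance w U' := abs_nonneg _
  rw [volRatio_eq, volRatio_eq, div_le_div_iff₀ (by positivity) (by positivity),
    ← mul_le_mul_iff_right₀ hvol (b := imbalance w U')]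
  constructor <;> intro h <;> linarith

lemma exists_maxVolRatio_eq [Nontrivial V] (w : V → V → ℝ) :
    ∃ U : Finset V, U.Nonempty ∧ U ≠ univ ∧ maxVolRatio w = volRatio w U ∧
      ∀ U' : Finset V, U'.Nonempty → U' ≠ univ → volRatio w U' ≤ volRatio w U := by
  obtain ⟨U₀, hU₀, hU₀', -⟩ := exists_vol_le_half w
  obtain ⟨U, ⟨hU, hU'⟩, hmax⟩ := Set.exists_max_image
    {U : Finset V | U.Nonempty ∧ U ≠ univ} (volRatio w) (Set.toFinite _) ⟨U₀, hU₀, hU₀'⟩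
  refine ⟨U, hU, hU', IsGreatest.csSup_eq ⟨⟨U, hU, hU', rfl⟩, ?_⟩,
    fun T hT hT' => hmax T ⟨hT, hT'⟩⟩
  rintro _ ⟨T, hT, hT', rfl⟩
  exact hmax T ⟨hT, hT'⟩

lemma exists_minimal_imbalance [Nontrivial V] (hdeg : ∀ i, 0 < deg w i) :
    ∃ U : Finset V, U.Nonempty ∧ U ≠ univ ∧
      2 * maxVolRatio w / (1 + maxVolRatio w) = 1 - imbalance w U / vol w univ ∧
      ∀ U', imbalance w U ≤ imbalance w U' := by
  have hvol : 0 < vol w univ := vol_pos hdeg univ_nonempty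
  obtain ⟨U, hU, hU', hmax, hle⟩ := exists_maxVolRatio_eq w
  have hle_vol : imbalance w U ≤ vol w univ := imbalance_le_vol_univ (fun i => (hdeg i).le) U
  refine ⟨U, hU, hU', hmax ▸ two_mul_volRatio_div_one_add_volRatio hvol U, fun T => ?_⟩
  rcases T.eq_empty_or_nonempty with rfl | hT
  · rwa [imbalance_empty hvol.le]
  rcases eq_or_ne T univ with rfl | hT'
  · rwa [← imbalance_compl w univ, compl_univ, imbalance_empty hvol.le]
  exact (volRatio_le_volRatio_iff hvol).1 (hle T hT hT')

lemma one_sub_imbalance_div_mul_cheeger_le_dualCheeger (hdeg : ∀ i, 0 < deg w i) {U : Finset V}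
    (hU : U.Nonempty) (hU' : U ≠ univ) :
    (1 - imbalance w U / vol w univ) * cheeger w ≤ dualCheeger w := by
  wlog hle : vol w U ≤ vol w Uᶜ generalizing U
  · rw [← imbalance_compl]
    refine this (compl_nonempty_of_ne_univ hU') ((compl_ne_univ_iff_nonempty U).2 hU) ?_
    rw [compl_compl]
    exact (not_le.1 hle).le
  have hvol := vol_add_vol_compl w U
  have hU_pos : 0 < vol w U := vol_pos hdeg hU
  have hvol_pos : 0 < vol w univ := vol_pos hdeg (hU.mono (subset_univ U))
  have hfactor : 1 - imbalance w U / vol w univ = 2 * vol w U / vol w univ := by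
    rw [imbalance, abs_of_nonpos (sub_nonpos.2 hle), one_sub_div hvol_pos.ne', ← hvol]
    ring
  have hcheeger : cheeger w * vol w U ≤ eW w U Uᶜ :=
    (le_div_iff₀ hU_pos).1 (cheeger_le hU hU' (by linarith))
  calc (1 - imbalance w U / vol w univ) * cheeger w
      = 2 * (cheeger w * vol w U) / vol w univ := by rw [hfactor]; ring
    _ ≤ 2 * eW w U Uᶜ / vol w univ := by gcongr
    _ ≤ dualCheeger w := two_mul_eW_compl_div_le_dualCheeger hU hU'

end Imbalance

section MinimalImbalance

lemma exists_imbalance_eq_zero_of_even {d : ℝ} (hreg : ∀ i, deg w i = d)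
    (heven : Even (Fintype.card V)) : ∃ U, imbalance w U = 0 := by
  obtain ⟨t, ht⟩ := heven
  obtain ⟨U, -, hU⟩ := exists_subset_card_eq (s := (univ : Finset V)) (n := t)
    (by rw [card_univ]; lia)
  have hUc : #Uᶜ = t := by rw [card_compl]; lia
  exact ⟨U, by rw [imbalance, vol_eq_card_mul hreg, vol_eq_card_mul hreg, hU, hUc, sub_self,
    abs_zero]⟩

lemma le_imbalance_of_odd {d : ℝ} (hreg : ∀ i, deg w i = d) (hodd : Odd (Fintype.card V))
    (U : Finset V) : d ≤ imbalance w U := by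
  have hne : (#U : ℤ) - #Uᶜ ≠ 0 := by
    rw [← card_add_card_compl U] at hodd
    grind
  have hone : (1 : ℝ) ≤ |(#U : ℝ) - #Uᶜ| := by
    have := Int.one_le_abs hne
    exact_mod_cast this
  calc d ≤ |d| := le_abs_self d
    _ ≤ |(#U : ℝ) - #Uᶜ| * |d| := le_mul_of_one_le_left (abs_nonneg d) hone
    _ = imbalance w U := by
      rw [imbalance, vol_eq_card_mul hreg, vol_eq_card_mul hreg, ← sub_mul, abs_mul]

variable [Nonempty V] {U : Finset V}

lemma card_mul_imbalance_le_vol_univ (hdeg : ∀ i, 0 < deg w i)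
    (hratio : ∀ i j, deg w i ≤ ((Fintype.card V : ℝ) - 1) * deg w j)
    (hmin : ∀ U', imbalance w U ≤ imbalance w U') :
    Fintype.card V * imbalance w U ≤ vol w univ := by
  obtain ⟨T, hT, -⟩ := exists_card_mul_abs_sum_sub_sum_compl_le hdeg hratio
  calc Fintype.card V * imbalance w U ≤ Fintype.card V * imbalance w T := by gcongr; exact hmin T
    _ ≤ vol w univ := hT

lemma card_mul_imbalance_eq_vol_univ_iff (hdeg : ∀ i, 0 < deg w i)
    (hratio : ∀ i j, deg w i ≤ ((Fintype.card V : ℝ) - 1) * deg w j)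
    (hmin : ∀ U', imbalance w U ≤ imbalance w U') :
    Fintype.card V * imbalance w U = vol w univ ↔
      (∃ d : ℝ, ∀ i, deg w i = d) ∧ Odd (Fintype.card V) := by
  constructor
  · intro heq
    obtain ⟨T, hT, hTeq⟩ := exists_card_mul_abs_sum_sub_sum_compl_le hdeg hratio
    have hUT : Fintype.card V * imbalance w U ≤ Fintype.card V * imbalance w T := by
      gcongr
      exact hmin T
    have hreg := hTeq (hT.antisymm (heq.symm.trans_le hUT))
    refine ⟨⟨_, hreg⟩, Nat.not_even_iff_odd.1 fun heven => ?_⟩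
    obtain ⟨S, hS⟩ := exists_imbalance_eq_zero_of_even hreg heven
    have hU_zero : imbalance w U = 0 := (hS ▸ hmin S).antisymm (abs_nonneg _)
    rw [hU_zero, mul_zero] at heq
    exact (vol_pos hdeg univ_nonempty).ne heq
  · rintro ⟨⟨d, hreg⟩, hodd⟩
    refine (card_mul_imbalance_le_vol_univ hdeg hratio hmin).antisymm ?_
    rw [vol_eq_card_mul hreg, card_univ]
    gcongr
    exact le_imbalance_of_odd hreg hodd U

end MinimalImbalance

theorem cheeger_le_dualCheeger_unweighted_general [Nontrivial V]
    (hsym : ∀ i j, w i j = w j i) (hw : ∀ i j, 0 ≤ w i j) (hconn : Conn w)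
    (hratio : ∀ i j, deg w i ≤ ((Fintype.card V : ℝ) - 1) * deg w j) :
    (((Fintype.card V : ℝ) - 1) / (Fintype.card V : ℝ) * cheeger w ≤
        2 * maxVolRatio w / (1 + maxVolRatio w) * cheeger w ∧
      2 * maxVolRatio w / (1 + maxVolRatio w) * cheeger w ≤ dualCheeger w ∧
      dualCheeger w ≤ 1) ∧
      (((Fintype.card V : ℝ) - 1) / (Fintype.card V : ℝ) * cheeger w =
          2 * maxVolRatio w / (1 + maxVolRatio w) * cheeger w ↔
        ((∃ d : ℝ, ∀ i, deg w i = d) ∧ Odd (Fintype.card V))) := by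
  have hdeg := hconn.deg_pos hw
  have hh : 0 < cheeger w := hconn.cheeger_pos hw
  have hvol : 0 < vol w univ := vol_pos hdeg univ_nonempty
  have hcard : (0 : ℝ) < Fintype.card V := mod_cast Fintype.card_pos
  obtain ⟨U, hU, hU', hR, hmin⟩ := exists_minimal_imbalance hdeg
  rw [hR, sub_div, div_self hcard.ne']
  refine ⟨⟨?_, one_sub_imbalance_div_mul_cheeger_le_dualCheeger hdeg hU hU',
    dualCheeger_le_one hw hsym⟩, ?_⟩
  · rw [mul_le_mul_iff_left₀ hh, sub_le_sub_iff_left, div_le_div_iff₀ hvol hcard, one_mul, mul_comm]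
    exact card_mul_imbalance_le_vol_univ hdeg hratio hmin
  · rw [mul_left_inj' hh.ne', sub_right_inj, div_eq_div_iff hcard.ne' hvol.ne', one_mul, eq_comm,
      mul_comm]
    exact card_mul_imbalance_eq_vol_univ_iff hdeg hratio hmin

section Unweighted

omit [Fintype V] [DecidableEq V] in
lemma nonneg_of_eq_zero_or_eq_one (h01 : ∀ i j, w i j = 0 ∨ w i j = 1) (i j : V) :
    0 ≤ w i j := by
  rcases h01 i j with h | h <;> simp [h]

omit [DecidableEq V] in
lemma Conn.one_le_deg [Nontrivial V] (hconn : Conn w) (h01 : ∀ i j, w i j = 0 ∨ w i j = 1)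
    (i : V) : 1 ≤ deg w i := by
  have hw := nonneg_of_eq_zero_or_eq_one h01
  obtain ⟨j, -, hj⟩ := exists_ne_zero_of_sum_ne_zero (hconn.deg_pos hw i).ne'
  exact ((h01 i j).resolve_left hj).symm.trans_le (single_le_sum (fun k _ => hw i k) (mem_univ j))

omit [DecidableEq V] in
lemma deg_le_card_sub_one (hle : ∀ i j, w i j ≤ 1) (hloop : ∀ i, w i i = 0) (i : V) :
    deg w i ≤ (Fintype.card V : ℝ) - 1 := by
  classical
  calc deg w i = ∑ j ∈ univ.erase i, w i j := (sum_erase univ (hloop i)).symm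
    _ ≤ #(univ.erase i) • (1 : ℝ) := sum_le_card_nsmul _ _ _ fun j _ => hle i j
    _ = (Fintype.card V : ℝ) - 1 := by
      rw [nsmul_one, cast_card_erase_of_mem (mem_univ i), card_univ]

omit [DecidableEq V] in
lemma Conn.deg_le_card_sub_one_mul_deg [Nontrivial V] (hconn : Conn w)
    (h01 : ∀ i j, w i j = 0 ∨ w i j = 1) (hloop : ∀ i, w i i = 0) (i j : V) :
    deg w i ≤ ((Fintype.card V : ℝ) - 1) * deg w j := by
  have hle i j : w i j ≤ 1 := by rcases h01 i j with h | h <;> simp [h]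
  have hcard : (1 : ℝ) ≤ Fintype.card V := mod_cast Fintype.card_pos
  exact (deg_le_card_sub_one hle hloop i).trans
    (le_mul_of_one_le_right (sub_nonneg.2 hcard) (hconn.one_le_deg h01 j))

end Unweighted

/-- Theorem 17.
For an unweighted graph with `N` vertices,
`((N-1)/N) h ≤ (2𝓡/(1+𝓡)) h ≤ h̄ ≤ 1`, with equality in the leftmost inequality iff
the graph is regular and `N` is odd. -/
theorem cheeger_le_dualCheeger_unweighted
    (w : V → V → ℝ)
    (hsym : ∀ i j, w i j = w j i) (h01 : ∀ i j, w i j = 0 ∨ w i j = 1)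
    (hloop : ∀ i, w i i = 0) (hconn : Conn w) (hN : 2 ≤ Fintype.card V)
    (R : ℝ)
    (hR : R = sSup { r : ℝ | ∃ U : Finset V, U.Nonempty ∧ U ≠ Finset.univ ∧
        r = min (vol w U) (vol w Uᶜ) / max (vol w U) (vol w Uᶜ) }) :
    (((Fintype.card V : ℝ) - 1) / (Fintype.card V : ℝ) * cheeger w ≤
        2 * R / (1 + R) * cheeger w ∧
      2 * R / (1 + R) * cheeger w ≤ dualCheeger w ∧
      dualCheeger w ≤ 1) ∧
      (((Fintype.card V : ℝ) - 1) / (Fintype.card V : ℝ) * cheeger w =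
          2 * R / (1 + R) * cheeger w ↔
        ((∃ d : ℝ, ∀ i, deg w i = d) ∧ Odd (Fintype.card V))) := by
  have : Nontrivial V := Fintype.one_lt_card_iff_nontrivial.1 hN
  exact hR ▸ cheeger_le_dualCheeger_unweighted_general hsym (nonneg_of_eq_zero_or_eq_one h01) hconn
    (hconn.deg_le_card_sub_one_mul_deg h01 hloop)

end BJ
end
end

section
/- Let l ≥ 1 and let 𝒜 ∈ [0,1] be any lower bound for the second smallest eigenvalue λ_1[l] of the normalized Laplacian Δ[l] of the neighborhood graph Γ[l], i.e. 𝒜 ≤ λ_1[l]. If l is even, then 1 − (1 − 𝒜)^{1/l} ≤ λ_1 ≤ … ≤ λ_{N−1} ≤ 1 + (1 − 𝒜)^{1/l}. If l is odd, then 1 − (1 − 𝒜)^{1/l} ≤ λ_1. -/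
open Finset

noncomputable section

namespace BJ

variable {V : Type*} [Fintype V] [DecidableEq V]

/-!
Let `P` be the random walk operator `(P u)(i) = (1/d_i) ∑_j w_ij u(j)`, so that `Δ = 1 - P`. The
neighborhood graph is built so that its random walk operator is `P ^ l`; hence an eigenfunction of
`Δ` for `μ` is an eigenfunction of `Δ[l]` for `1 - (1 - μ) ^ l`. If `μ ≠ 0`, it is moreover
orthogonal to the constants, because the degrees form a stationary measure of `P`. Therefore
`𝒜 ≤ λ₁[l] ≤ 1 - (1 - μ) ^ l`, and it remains to extract an `l`-th root from
`(1 - μ) ^ l ≤ 1 - 𝒜`.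
-/

section LinearAlgebra

open Matrix

variable {n R : Type*} [Fintype n]

theorem pow_mulVec_eq_smul [DecidableEq n] [CommSemiring R] {M : Matrix n n R} {u : n → R} {c : R}
    (h : M *ᵥ u = c • u) (k : ℕ) : M ^ k *ᵥ u = c ^ k • u := by
  induction k with
  | zero => simp
  | succ k ih => rw [pow_succ, ← mulVec_mulVec, h, mulVec_smul, ih, smul_smul, ← pow_succ']

theorem dotProduct_eq_zero_of_vecMul_eq_smul_of_mulVec_eq_smul [CommSemiring R] [IsCancelMulZero R]
    {M : Matrix n n R} {v u : n → R} {a b : R} (hv : v ᵥ* M = a • v) (hu : M *ᵥ u = b • u)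
    (hab : a ≠ b) : v ⬝ᵥ u = 0 := by
  have h : a * (v ⬝ᵥ u) = b * (v ⬝ᵥ u) := by
    simpa only [hv, hu, smul_dotProduct, dotProduct_smul, smul_eq_mul]
      using (dotProduct_mulVec v M u).symm
  exact (mul_eq_mul_right_iff.mp h).resolve_left hab

end LinearAlgebra

section Roots

variable {x B : ℝ} {l : ℕ}

theorem le_rpow_one_div_of_pow_le (hl : l ≠ 0) (hB : 0 ≤ B) (h : x ^ l ≤ B) :
    x ≤ B ^ ((1 : ℝ) / l) := by
  rcases le_total x 0 with hx | hx
  · exact hx.trans (Real.rpow_nonneg hB _)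
  · rw [one_div, Real.le_rpow_inv_iff_of_pos hx hB (by positivity), Real.rpow_natCast]
    exact h

theorem neg_le_rpow_one_div_of_even_of_pow_le (hl : l ≠ 0) (heven : Even l) (h : x ^ l ≤ B) :
    -x ≤ B ^ ((1 : ℝ) / l) :=
  le_rpow_one_div_of_pow_le hl (heven.pow_nonneg x |>.trans h) (by rwa [heven.neg_pow])

end Roots

section Transition

open Matrix

variable {w : V → V → ℝ}

/-- The transition matrix `P_ij = w_ij / d_i` of the random walk on the weighted graph. Rows of
degree zero are zero. -/
def transition (w : V → V → ℝ) : Matrix V V ℝ := of fun i j => w i j / deg w i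

omit [DecidableEq V] in
theorem lap_eq_sub_transition_mulVec (w : V → V → ℝ) (u : V → ℝ) :
    lap w u = u - transition w *ᵥ u := by
  ext i
  simp only [lap, Pi.sub_apply, transition, mulVec, dotProduct, of_apply, mul_sum]
  congr! 2
  ring

omit [DecidableEq V] in
theorem forall_lap_eq_mul_iff {u : V → ℝ} {μ : ℝ} :
    (∀ i, lap w u i = μ * u i) ↔ transition w *ᵥ u = (1 - μ) • u := by
  rw [← show lap w u = μ • u ↔ ∀ i, lap w u i = μ * u i from funext_iff,
    lap_eq_sub_transition_mulVec, sub_smul, one_smul, sub_eq_iff_eq_add, eq_sub_iff_add_eq',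
    eq_comm]

omit [DecidableEq V] in
theorem transition_mulVec_one (hdeg : ∀ i, deg w i ≠ 0) : transition w *ᵥ 1 = 1 := by
  ext i
  simp only [transition, mulVec, dotProduct, of_apply, Pi.one_apply, mul_one, ← sum_div]
  exact div_self (hdeg i)

omit [DecidableEq V] in
theorem deg_vecMul_transition (hdeg : ∀ i, deg w i ≠ 0) (hbal : ∀ j, ∑ i, w i j = deg w j) :
    deg w ᵥ* transition w = deg w := by
  ext j
  simp only [transition, vecMul, dotProduct, of_apply, mul_div_cancel₀ _ (hdeg _), hbal]

theorem wl_eq_deg_mul_transition_pow (w : V → V → ℝ) (l : ℕ) (i j : V) :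
    wl w l i j = deg w i * (transition w ^ l) i j := by
  induction l generalizing j with
  | zero => simp [wl, one_apply]
  | succ l ih => simp only [wl, ih, pow_succ, mul_apply, transition, of_apply, mul_sum,
      mul_assoc, mul_div_assoc]

theorem deg_wl (hdeg : ∀ i, deg w i ≠ 0) (l : ℕ) : deg (wl w l) = deg w := by
  ext i
  have h : (transition w ^ l *ᵥ 1) i = 1 := by
    rw [pow_mulVec_eq_smul (c := 1) (by rw [transition_mulVec_one hdeg, one_smul])]
    simp
  calc deg (wl w l) i = deg w i * (transition w ^ l *ᵥ 1) i := by
        simp only [deg, wl_eq_deg_mul_transition_pow, ← mul_sum, mulVec, dotProduct, Pi.one_apply,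
          mul_one]
    _ = deg w i := by rw [h, mul_one]

theorem transition_wl (hdeg : ∀ i, deg w i ≠ 0) (l : ℕ) :
    transition (wl w l) = transition w ^ l := by
  ext i j
  rw [transition, of_apply, deg_wl hdeg, wl_eq_deg_mul_transition_pow,
    mul_div_cancel_left₀ _ (hdeg i)]

end Transition

section Spectrum

open Matrix

variable {w : V → V → ℝ}

/-- The eigenvalues of the normalized Laplacian that have an eigenfunction orthogonal to the
constants in the degree inner product. Its infimum encodes the second smallest eigenvalue `λ₁`
counted with multiplicity. -/
def meanZeroEigenvalues (w : V → V → ℝ) : Set ℝ :=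
  {μ | ∃ u : V → ℝ, u ≠ 0 ∧ ∑ i, deg w i * u i = 0 ∧ ∀ i, lap w u i = μ * u i}

omit [DecidableEq V] in
theorem finite_setOf_isEigen (w : V → V → ℝ) : {μ | IsEigen w μ}.Finite := by
  have hfin := Module.End.finite_hasEigenvalue (transition w).mulVecLin
  refine (hfin.preimage (f := fun μ => 1 - μ) sub_right_injective.injOn).subset ?_
  rintro μ ⟨u, hu, hlap⟩
  exact Module.End.hasEigenvalue_of_hasEigenvector
    ⟨Module.End.mem_eigenspace_iff.mpr (forall_lap_eq_mul_iff.mp hlap), hu⟩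

omit [DecidableEq V] in
theorem bddBelow_meanZeroEigenvalues (w : V → V → ℝ) : BddBelow (meanZeroEigenvalues w) :=
  (finite_setOf_isEigen w).bddBelow.mono fun μ ⟨u, hu, _, hlap⟩ =>
    (⟨u, hu, hlap⟩ : IsEigen w μ)

theorem one_sub_pow_mem_meanZeroEigenvalues_wl (hdeg : ∀ i, deg w i ≠ 0)
    (hbal : ∀ j, ∑ i, w i j = deg w j) {μ : ℝ} (hμ : IsEigen w μ) (hμ0 : μ ≠ 0) (l : ℕ) :
    1 - (1 - μ) ^ l ∈ meanZeroEigenvalues (wl w l) := by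
  obtain ⟨u, hu, hlap⟩ := hμ
  have hPu : transition w *ᵥ u = (1 - μ) • u := forall_lap_eq_mul_iff.mp hlap
  have hstat : deg w ᵥ* transition w = (1 : ℝ) • deg w := by
    rw [deg_vecMul_transition hdeg hbal, one_smul]
  refine ⟨u, hu, ?_, forall_lap_eq_mul_iff.mpr ?_⟩
  · rw [deg_wl hdeg]
    exact dotProduct_eq_zero_of_vecMul_eq_smul_of_mulVec_eq_smul hstat hPu
      (Ne.symm (sub_eq_self.not.mpr hμ0))
  · rw [transition_wl hdeg, pow_mulVec_eq_smul hPu, sub_sub_cancel]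

end Spectrum

theorem eigenvalue_bounds_from_neighborhood_lower_bound_general {w : V → V → ℝ}
    (hdeg : ∀ i, deg w i ≠ 0) (hbal : ∀ j, ∑ i, w i j = deg w j)
    {μ : ℝ} (hμ : IsEigen w μ) (hμ0 : μ ≠ 0) {l : ℕ} (hl : l ≠ 0)
    {A : ℝ} (hA1 : A ≤ 1) (hA : A ≤ sInf (meanZeroEigenvalues (wl w l))) :
    1 - (1 - A) ^ ((1 : ℝ) / l) ≤ μ ∧ (Even l → μ ≤ 1 + (1 - A) ^ ((1 : ℝ) / l)) := by
  have hpow : (1 - μ) ^ l ≤ 1 - A := le_sub_comm.mp <| hA.trans <|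
    csInf_le (bddBelow_meanZeroEigenvalues _)
      (one_sub_pow_mem_meanZeroEigenvalues_wl hdeg hbal hμ hμ0 l)
  refine ⟨?_, fun heven => ?_⟩
  · linarith [le_rpow_one_div_of_pow_le hl (sub_nonneg.mpr hA1) hpow]
  · linarith [neg_le_rpow_one_div_of_even_of_pow_le hl heven hpow]

/-- Theorem: eigenvalue bounds from a lower bound on `λ₁[l]`.
If `𝒜 ∈ [0,1]` is a lower bound for the second smallest eigenvalue `λ₁[l]` of the
normalized Laplacian of the neighborhood graph `Γ[l]`, then for even `l`,
`1 - (1-𝒜)^{1/l} ≤ λ₁ ≤ … ≤ λ_{N-1} ≤ 1 + (1-𝒜)^{1/l}`, and for odd `l`,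
`1 - (1-𝒜)^{1/l} ≤ λ₁`. Here `λ₁` (resp. `λ_{N-1}`) is the second smallest (resp.
largest) eigenvalue of `Δ`, and `λ₁[l]` is the smallest eigenvalue of `Δ[l]` admitting
an eigenfunction orthogonal to the constants w.r.t. the degree inner product. -/
theorem eigenvalue_bounds_from_neighborhood_lower_bound
    (w : V → V → ℝ)
    (hsym : ∀ i j, w i j = w j i) (hnn : ∀ i j, 0 ≤ w i j)
    (hdeg : ∀ i, 0 < deg w i) (hconn : Conn w) (hN : 2 ≤ Fintype.card V)
    (lam1 lamN : ℝ)
    (hlam1 : IsEigen w lam1) (hlam1pos : 0 < lam1)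
    (hlam1min : ∀ μ, IsEigen w μ → μ ≠ 0 → lam1 ≤ μ)
    (hlamN : IsEigen w lamN) (hlamNmax : ∀ μ, IsEigen w μ → μ ≤ lamN)
    (l : ℕ) (hl : 1 ≤ l)
    (lam1l : ℝ)
    (hlam1l : lam1l = sInf { μ : ℝ | ∃ u : V → ℝ, u ≠ 0 ∧
        (∑ i, deg (wl w l) i * u i) = 0 ∧ ∀ i, lap (wl w l) u i = μ * u i })
    (A : ℝ) (hA0 : 0 ≤ A) (hA1 : A ≤ 1) (hAle : A ≤ lam1l) :
    (Even l →
        1 - (1 - A) ^ ((1 : ℝ) / l) ≤ lam1 ∧ lamN ≤ 1 + (1 - A) ^ ((1 : ℝ) / l)) ∧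
      (Odd l → 1 - (1 - A) ^ ((1 : ℝ) / l) ≤ lam1) := by
  have bounds {μ : ℝ} (hμ : IsEigen w μ) (hμpos : 0 < μ) :=
    eigenvalue_bounds_from_neighborhood_lower_bound_general (fun i => (hdeg i).ne')
      (fun j => sum_congr rfl fun i _ => hsym i j) hμ hμpos.ne' (by lia) hA1
      (hAle.trans_eq hlam1l)
  have hlow := (bounds hlam1 hlam1pos).1
  have hup := (bounds hlamN (hlam1pos.trans_le (hlamNmax _ hlam1))).2
  exact ⟨fun heven => ⟨hlow, hup heven⟩, fun _ => hlow⟩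

end BJ
end
end

section
/- Let u : V → ℝ be an eigenfunction of Δ for the eigenvalue λ, i.e. Δu = λu with u not identically zero. Then ∑_{i∈V} (1/d_i) ∑_{j,k∈V} w_{ij} w_{ik} (u(j) − u(k))² = 2λ(2−λ)·∑_{i∈V} d_i u(i)². Consequently, if λ ≠ 0, then 2 − λ = ( ∑_{i∈V} (1/d_i) ∑_{j,k∈V} w_{ij} w_{ik} (u(j) − u(k))² ) / ( ∑_{i∈V} ∑_{j∈V} w_{ij} (u(i) − u(j))² ). -/
open Finset

noncomputable section

namespace BJ

variable {V : Type*} [Fintype V] [DecidableEq V]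

/-!
For an arbitrary function `u`, the mean of `u` over the neighbours of `i`, with weights
`w i j / deg w i`, is `u i - lap w u i`. The inner sum
`∑ j, ∑ k, w i j * w i k * (u j - u k) ^ 2` is `2 * deg w i ^ 2` times the variance of `u` over
these neighbours, that is, the mean of `u ^ 2` minus the square of the mean of `u`. As `w` is
symmetric, summing the means of `u ^ 2` with weights `deg w i` gives `∑ i, deg w i * u i ^ 2`.
Hence both sums of the theorem can be expressed through `deg w`, `u` and `lap w u` for every `u`,
and the eigenvalue equation is only substituted at the end.
-/

section FiniteSums

variable {ι R : Type*} [CommRing R] (s : Finset ι) (a f : ι → R)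

theorem sum_mul_const_sub_sq (c : R) :
    ∑ j ∈ s, a j * (c - f j) ^ 2 =
      c ^ 2 * ∑ j ∈ s, a j - 2 * c * ∑ j ∈ s, a j * f j + ∑ j ∈ s, a j * f j ^ 2 := by
  simp only [mul_sum, ← sum_sub_distrib, ← sum_add_distrib]
  exact sum_congr rfl fun j _ => by ring

theorem sum_sum_mul_mul_sub_sq :
    ∑ j ∈ s, ∑ k ∈ s, a j * a k * (f j - f k) ^ 2 =
      2 * ((∑ j ∈ s, a j) * ∑ j ∈ s, a j * f j ^ 2 - (∑ j ∈ s, a j * f j) ^ 2) := by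
  set A := ∑ j ∈ s, a j with hA
  set M := ∑ j ∈ s, a j * f j with hM
  set Q := ∑ j ∈ s, a j * f j ^ 2 with hQ
  calc ∑ j ∈ s, ∑ k ∈ s, a j * a k * (f j - f k) ^ 2
      = ∑ j ∈ s, a j * (f j ^ 2 * A - 2 * f j * M + Q) := by
        simp only [mul_assoc (a _), ← mul_sum, sum_mul_const_sub_sq, hA, hM, hQ]
    _ = ∑ j ∈ s, (a j * f j ^ 2 * A - a j * f j * (2 * M) + a j * Q) :=
        sum_congr rfl fun j _ => by ring
    _ = Q * A - M * (2 * M) + A * Q := by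
        rw [sum_add_distrib, sum_sub_distrib, ← sum_mul, ← sum_mul, ← sum_mul]
    _ = 2 * (A * Q - M ^ 2) := by ring

end FiniteSums

section Laplacian

omit [DecidableEq V]

variable {w : V → V → ℝ}

theorem sum_mul_eq_deg_mul_sub_lap {i : V} (hi : deg w i ≠ 0) (u : V → ℝ) :
    ∑ j, w i j * u j = deg w i * (u i - lap w u i) := by
  rw [lap]
  field_simp
  ring

theorem sum_sum_mul_eq_sum_deg_mul (hsym : ∀ i j, w i j = w j i) (f : V → ℝ) :
    ∑ i, ∑ j, w i j * f j = ∑ i, deg w i * f i := by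
  rw [sum_comm]
  refine sum_congr rfl fun j _ => ?_
  rw [deg, sum_mul]
  exact sum_congr rfl fun i _ => by rw [hsym]

theorem sum_sum_mul_sub_sq_eq_sum_deg_mul_lap (hsym : ∀ i j, w i j = w j i)
    (hdeg : ∀ i, deg w i ≠ 0) (u : V → ℝ) :
    ∑ i, ∑ j, w i j * (u i - u j) ^ 2 = 2 * ∑ i, deg w i * (u i * lap w u i) := by
  have expand (i : V) : ∑ j, w i j * (u i - u j) ^ 2 =
      2 * (deg w i * (u i * lap w u i)) - deg w i * u i ^ 2 + ∑ j, w i j * u j ^ 2 := by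
    rw [sum_mul_const_sub_sq, sum_mul_eq_deg_mul_sub_lap (hdeg i) u, ← deg]
    ring
  simp only [expand, sum_add_distrib, sum_sub_distrib, ← mul_sum,
    sum_sum_mul_eq_sum_deg_mul hsym fun j => u j ^ 2, sub_add_cancel]

theorem sum_inv_deg_mul_sum_sum_sub_sq_eq_sum_deg_mul_lap (hsym : ∀ i j, w i j = w j i)
    (hdeg : ∀ i, deg w i ≠ 0) (u : V → ℝ) :
    ∑ i, (1 / deg w i) * ∑ j, ∑ k, w i j * w i k * (u j - u k) ^ 2 =
      2 * ∑ i, deg w i * (lap w u i * (2 * u i - lap w u i)) := by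
  have expand (i : V) : (1 / deg w i) * ∑ j, ∑ k, w i j * w i k * (u j - u k) ^ 2 =
      2 * (∑ j, w i j * u j ^ 2 - deg w i * (u i - lap w u i) ^ 2) := by
    have hi := hdeg i
    rw [sum_sum_mul_mul_sub_sq, sum_mul_eq_deg_mul_sub_lap hi u, ← deg]
    field_simp
  simp only [expand, ← mul_sum, sum_sub_distrib,
    sum_sum_mul_eq_sum_deg_mul hsym fun j => u j ^ 2]
  rw [← sum_sub_distrib]
  exact congrArg (2 * ·) (sum_congr rfl fun i _ => by ring)

theorem sum_deg_mul_sq_pos (hdeg : ∀ i, 0 < deg w i) {u : V → ℝ} (hu : u ≠ 0) :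
    0 < ∑ i, deg w i * u i ^ 2 := by
  obtain ⟨i, hi⟩ := Function.ne_iff.mp hu
  exact sum_pos' (fun j _ => mul_nonneg (hdeg j).le (sq_nonneg _))
    ⟨i, mem_univ i, mul_pos (hdeg i) (sq_pos_of_ne_zero hi)⟩

theorem eigenfunction_two_sub_lambda_identity_general
    (hsym : ∀ i j, w i j = w j i) (hdeg : ∀ i, 0 < deg w i)
    {lam : ℝ} {u : V → ℝ} (hu : u ≠ 0) (heig : ∀ i, lap w u i = lam * u i) :
    (∑ i, (1 / deg w i) * ∑ j, ∑ k, w i j * w i k * (u j - u k) ^ 2) =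
        2 * lam * (2 - lam) * ∑ i, deg w i * u i ^ 2 ∧
      (lam ≠ 0 → 2 - lam =
        (∑ i, (1 / deg w i) * ∑ j, ∑ k, w i j * w i k * (u j - u k) ^ 2) /
          (∑ i, ∑ j, w i j * (u i - u j) ^ 2)) := by
  have hdeg_ne (i : V) : deg w i ≠ 0 := (hdeg i).ne'
  have numerator : ∑ i, (1 / deg w i) * ∑ j, ∑ k, w i j * w i k * (u j - u k) ^ 2 =
      2 * lam * (2 - lam) * ∑ i, deg w i * u i ^ 2 := by
    rw [sum_inv_deg_mul_sum_sum_sub_sq_eq_sum_deg_mul_lap hsym hdeg_ne, mul_sum, mul_sum]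
    exact sum_congr rfl fun i _ => by rw [heig]; ring
  have denominator : ∑ i, ∑ j, w i j * (u i - u j) ^ 2 =
      2 * lam * ∑ i, deg w i * u i ^ 2 := by
    rw [sum_sum_mul_sub_sq_eq_sum_deg_mul_lap hsym hdeg_ne, mul_sum, mul_sum]
    exact sum_congr rfl fun i _ => by rw [heig]; ring
  refine ⟨numerator, fun hlam => ?_⟩
  have sum_ne_zero := (sum_deg_mul_sq_pos hdeg hu).ne'
  rw [numerator, denominator]
  field_simp

end Laplacian

/-- Lemma 22 / identity (highest1)-(highest2).
If `u` is an eigenfunction of `Δ` for the eigenvalue `λ`, then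
`∑_i (1/d_i) ∑_{j,k} w_ij w_ik (u(j)-u(k))² = 2λ(2-λ) ∑_i d_i u(i)²`, and hence for
`λ ≠ 0`,
`2 - λ = (∑_i (1/d_i) ∑_{j,k} w_ij w_ik (u(j)-u(k))²) / (∑_i ∑_j w_ij (u(i)-u(j))²)`. -/
theorem eigenfunction_two_sub_lambda_identity
    (w : V → V → ℝ)
    (hsym : ∀ i j, w i j = w j i) (hnn : ∀ i j, 0 ≤ w i j)
    (hdeg : ∀ i, 0 < deg w i) (hconn : Conn w) (hN : 2 ≤ Fintype.card V)
    (lam : ℝ) (u : V → ℝ) (hu : u ≠ 0) (heig : ∀ i, lap w u i = lam * u i) :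
    (∑ i, (1 / deg w i) * ∑ j, ∑ k, w i j * w i k * (u j - u k) ^ 2) =
        2 * lam * (2 - lam) * ∑ i, deg w i * u i ^ 2 ∧
      (lam ≠ 0 → 2 - lam =
        (∑ i, (1 / deg w i) * ∑ j, ∑ k, w i j * w i k * (u j - u k) ^ 2) /
          (∑ i, ∑ j, w i j * (u i - u j) ^ 2)) := by
  exact eigenfunction_two_sub_lambda_identity_general hsym hdeg hu heig

end BJ
end
end
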